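/- arXiv:math/0403530 — 3 statements merged into one kernel-verified Lean document; each statement's English description precedes it below -/
import Mathlib

section
/- Let R = Z[x_1,...,x_n]/J, where J = ⟨e_1(x_1,...,x_n), ..., e_n(x_1,...,x_n)⟩. Every degree-one element f of R has nilpotence order at least n (i.e., f^{n-1} ≠ 0 unless f = 0), and f satisfies f^n = 0 if and only if f is an integer scalar multiple of the image of one of the variables x_1,...,x_n. -/
open MvPolynomial Finset

/-- The set of the first `j` variables among `x_0, ..., x_{n-1}`. -/
def fv (n j : ℕ) : Finset (Fin n) := Finset.univ.filter (fun i => (i : ℕ) < j)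

/-- Complete homogeneous symmetric polynomial of degree `m` in the variables indexed by `S`. -/
noncomputable def hh (R : Type*) [CommRing R] (n m : ℕ) (S : Finset (Fin n)) :
    MvPolynomial (Fin n) R :=
  ∑ s ∈ S.sym m, ((s : Multiset (Fin n)).map (X : Fin n → MvPolynomial (Fin n) R)).prod

/-- Elementary symmetric polynomial of degree `m` in the variables indexed by `S`. -/
noncomputable def ee (R : Type*) [CommRing R] (n m : ℕ) (S : Finset (Fin n)) :
    MvPolynomial (Fin n) R :=
  ∑ s ∈ S.powersetCard m, ∏ i ∈ s, X i

/-!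
Membership in the ideal is tested by evaluating at points `v` whose coordinates are the `n`-th
roots of unity in some order. Every `e_k` with `0 < k < n` vanishes there and `e_n` takes the same
value at all of them, so a homogeneous element of the ideal vanishes at all these points if its
degree is less than `n`, and takes one common value on them if its degree is `n`.

Let `f = ∑ a_i x_i`. If `f ^ (n - 1)` is zero in the quotient, then `a ⬝ v = 0` for all `v`;
swapping two coordinates of `v` shows that all `a_i` are equal, so `f` is a multiple of `e_1`.
If `f ^ n` is zero, then `(a ⬝ v) ^ n` does not depend on `v`. Swapping two disjoint pairs of
coordinates gives a parallelogram of values with equal `n`-th powers. Over `ℂ` its vertices lie on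
a circle about `0`, so it is a rectangle centred at `0` unless it degenerates, which relates
`a_i - a_j` to `a_k - a_l`. Comparing two placements of `1, ζ, ζ ^ 2, ζ ^ 3` at four indices shows
that one of these differences vanishes, which for `n ≥ 4` forces all but one of the `a_i` to agree;
then `f` is a multiple of a variable modulo `e_1`. Conversely, `x_i ^ n` is zero in the quotient
because `x_i` is a root of `∏ j, (T - x_j)`.
-/

section CoinvariantIdeal

/-- The ideal of `R[x_i : i ∈ ι]` generated by the elementary symmetric polynomials of positive
degree, the generators of the ideal of relations in the cohomology ring of the complete flag
variety. Degrees are cut off at `Fintype.card ι`, beyond which those polynomials vanish. -/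
noncomputable def coinvariantIdeal (ι R : Type*) [Fintype ι] [CommRing R] :
    Ideal (MvPolynomial ι R) :=
  Ideal.span (esymm ι R '' (Icc 1 (Fintype.card ι) : Finset ℕ))

lemma isHomogeneous_esymm (ι R : Type*) [Fintype ι] [CommSemiring R] (k : ℕ) :
    (esymm ι R k).IsHomogeneous k := by
  refine IsHomogeneous.sum _ _ _ fun s hs ↦ ?_
  simpa [(mem_powersetCard.1 hs).2] using
    IsHomogeneous.prod s (X : ι → MvPolynomial ι R) (fun _ ↦ 1) fun i _ ↦ isHomogeneous_X R i

attribute [local instance] MvPolynomial.gradedAlgebra in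
lemma homogeneousComponent_mul_of_isHomogeneous {σ R : Type*} [CommSemiring R]
    (p : MvPolynomial σ R) {q : MvPolynomial σ R} {k : ℕ} (hq : q.IsHomogeneous k) (m : ℕ) :
    homogeneousComponent m (p * q) =
      if k ≤ m then homogeneousComponent (m - k) p * q else 0 := by
  have hdec (r : MvPolynomial σ R) (i : ℕ) :
      (DirectSum.decompose (homogeneousSubmodule σ R) r i : MvPolynomial σ R) =
        homogeneousComponent i r :=
    decomposition.decompose'_apply r i
  simpa only [hdec] using
    DirectSum.coe_decompose_mul_of_right_mem (homogeneousSubmodule σ R) (a := p) m hq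

variable {ι R : Type*} [Fintype ι] [CommRing R]

lemma exists_eq_sum_mul_esymm_of_mem_coinvariantIdeal {p : MvPolynomial ι R} {m : ℕ}
    (hm : m ≤ Fintype.card ι) (hp : p.IsHomogeneous m) (hmem : p ∈ coinvariantIdeal ι R) :
    ∃ q : ℕ → MvPolynomial ι R, (∀ k, (q k).IsHomogeneous (m - k)) ∧
      p = ∑ k ∈ Icc 1 m, q k * esymm ι R k := by
  obtain ⟨q, hq⟩ := (Submodule.mem_span_image_finset_iff_exists_fun' _).1 hmem
  have hcomp (k : ℕ) : homogeneousComponent m (q k • esymm ι R k) =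
      if k ≤ m then homogeneousComponent (m - k) (q k) * esymm ι R k else 0 :=
    homogeneousComponent_mul_of_isHomogeneous _ (isHomogeneous_esymm ι R k) m
  have hfilter : (Icc 1 (Fintype.card ι)).filter (· ≤ m) = Icc 1 m := by grind
  refine ⟨fun k ↦ homogeneousComponent (m - k) (q k),
    fun k ↦ homogeneousComponent_isHomogeneous _ _, ?_⟩
  rw [← homogeneousComponent_eq_self hp, ← hq, map_sum, sum_congr rfl fun k _ ↦ hcomp k,
    ← sum_filter, hfilter]

lemma esymm_mem_coinvariantIdeal {k : ℕ} (hk : 1 ≤ k) (hk' : k ≤ Fintype.card ι) :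
    esymm ι R k ∈ coinvariantIdeal ι R :=
  Ideal.subset_span ⟨k, by simp [hk, hk'], rfl⟩

lemma sum_X_mem_coinvariantIdeal : ∑ i, X i ∈ coinvariantIdeal ι R := by
  cases isEmpty_or_nonempty ι
  · simp
  · exact esymm_one ι R ▸ esymm_mem_coinvariantIdeal le_rfl Fintype.card_pos

-- Evaluate `∏ j, (T + x_j) = ∑ k, e_k T ^ (n - k)` at `T = -x_i`.
lemma X_pow_card_mem_coinvariantIdeal (i : ι) :
    X i ^ Fintype.card ι ∈ coinvariantIdeal ι R := by
  have vieta := congrArg (Polynomial.eval (-X i)) (prod_C_add_X_eq_sum_esymm R ι)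
  rw [Polynomial.eval_prod, prod_eq_zero (mem_univ i) (by simp), Polynomial.eval_finsetSum,
    sum_range_succ'] at vieta
  simp only [Polynomial.eval_mul, Polynomial.eval_C, Polynomial.eval_pow, Polynomial.eval_X,
    esymm_zero, one_mul, Nat.sub_zero] at vieta
  have hneg : (-X i) ^ Fintype.card ι ∈ coinvariantIdeal ι R := by
    rw [eq_neg_of_add_eq_zero_right vieta.symm]
    exact neg_mem (sum_mem fun k hk ↦ Ideal.mul_mem_right _ _
      (esymm_mem_coinvariantIdeal k.succ_pos (mem_range.1 hk)))
  rw [neg_pow] at hneg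
  exact (Ideal.unit_mul_mem_iff_mem _ (isUnit_neg_one.pow _)).1 hneg

lemma mk_sum_C_mul_X_eq_smul_mk_X {a : ι → R} {i : ι} {c : R} (h : ∀ j, j ≠ i → a j = c) :
    Ideal.Quotient.mk (coinvariantIdeal ι R) (∑ j, C (a j) * X j) =
      (a i - c) • Ideal.Quotient.mk (coinvariantIdeal ι R) (X i) := by
  classical
  have hdiff : ∑ j, C (a j) * X j - (a i - c) • X i = C c * ∑ j, X j := by
    rw [mul_sum, ← add_sum_erase _ _ (mem_univ i), ← add_sum_erase _ _ (mem_univ i),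
      sum_congr rfl fun j hj ↦ by rw [h j (ne_of_mem_erase hj)], smul_eq_C_mul, C_sub]
    ring
  have hmem := Ideal.mul_mem_left _ (C c) (sum_X_mem_coinvariantIdeal (ι := ι) (R := R))
  exact Ideal.Quotient.eq.2 (hdiff ▸ hmem)

lemma coinvariantIdeal_fin_eq_span_range (n : ℕ) :
    coinvariantIdeal (Fin n) R =
      Ideal.span (Set.range fun i : Fin n ↦ esymm (Fin n) R ((i : ℕ) + 1)) := by
  have hrange : Set.range (fun i : Fin n ↦ (i : ℕ) + 1) = (Icc 1 n : Finset ℕ) := by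
    ext k
    simp only [Set.mem_range, coe_Icc, Set.mem_Icc]
    exact ⟨by rintro ⟨i, rfl⟩; omega, fun hk ↦ ⟨⟨k - 1, by omega⟩, Nat.sub_add_cancel hk.1⟩⟩
  rw [coinvariantIdeal, Fintype.card_fin, ← hrange, ← Set.range_comp]
  rfl

end CoinvariantIdeal

section RootsOfUnity

variable {F : Type*} [Field F] {ζ : F} {n : ℕ}

lemma esymm_nthRoots_one_eq_zero (hcard : (Polynomial.nthRoots n (1 : F)).card = n) {k : ℕ}
    (hk : 0 < k) (hkn : k < n) : (Polynomial.nthRoots n (1 : F)).esymm k = 0 := by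
  have hdeg : (Polynomial.X ^ n - Polynomial.C (1 : F)).natDegree = n :=
    Polynomial.natDegree_X_pow_sub_C
  have vieta := Polynomial.coeff_eq_esymm_roots_of_card (hcard.trans hdeg.symm) (k := n - k)
    (by omega)
  rw [hdeg, Polynomial.leadingCoeff_X_pow_sub_C (hk.trans hkn), Nat.sub_sub_self hkn.le,
    Polynomial.coeff_sub, Polynomial.coeff_X_pow, Polynomial.coeff_C, if_neg (by omega),
    if_neg (by omega)] at vieta
  simpa [Polynomial.nthRoots] using vieta.symm

lemma exists_eq_pow_mul_of_pow_eq_pow [NeZero n] (hζ : IsPrimitiveRoot ζ n) {x y : F}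
    (h : x ^ n = y ^ n) : ∃ p < n, x = ζ ^ p * y := by
  rcases eq_or_ne y 0 with rfl | hy
  · exact ⟨0, Nat.pos_of_neZero n, by simpa [NeZero.ne n] using h⟩
  · have hone : (x / y) ^ n = 1 := by rw [div_pow, h, div_self (pow_ne_zero _ hy)]
    obtain ⟨p, hpn, hp⟩ := hζ.eq_pow_of_pow_eq_one hone
    exact ⟨p, hpn, by rw [hp, div_mul_cancel₀ _ hy]⟩

variable [CharZero F]

lemma aeval_inv_eq_zero_of_isPrimitiveRoot [NeZero n] (hζ : IsPrimitiveRoot ζ n)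
    {P : Polynomial ℤ} (hP : Polynomial.aeval ζ P = 0) : Polynomial.aeval ζ⁻¹ P = 0 := by
  have hn : 0 < n := Nat.pos_of_neZero n
  have hcop : (n - 1).Coprime n := (Nat.coprime_self_sub_left hn).2 (Nat.coprime_one_left n)
  have hpow : ζ ^ (n - 1) = ζ⁻¹ :=
    eq_inv_of_mul_eq_one_left (by rw [← pow_succ, Nat.sub_add_cancel hn, hζ.pow_eq_one])
  have hint : IsIntegral ℤ ζ := hζ.isIntegral hn
  rw [minpoly.isIntegrallyClosed_dvd_iff hint, hζ.minpoly_eq_pow_coprime hcop] at hP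
  rwa [← hpow, minpoly.isIntegrallyClosed_dvd_iff (hint.pow _)]

-- Over `ℂ`: a parallelogram inscribed in a circle about `0` is a rectangle centred at `0`, unless
-- it is degenerate. The relation between inverses plays the role of complex conjugation.
lemma eq_or_eq_or_add_eq_zero_of_pow_eq_pow [NeZero n] (hζ : IsPrimitiveRoot ζ n) {x y z w : F}
    (hx : x ^ n = z ^ n) (hy : y ^ n = z ^ n) (hw : w ^ n = z ^ n) (h : x + y = z + w) :
    x = z ∨ x = w ∨ z + w = 0 := by
  obtain ⟨p, -, rfl⟩ := exists_eq_pow_mul_of_pow_eq_pow hζ hx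
  obtain ⟨q, -, rfl⟩ := exists_eq_pow_mul_of_pow_eq_pow hζ hy
  obtain ⟨r, -, rfl⟩ := exists_eq_pow_mul_of_pow_eq_pow hζ hw
  rcases eq_or_ne z 0 with rfl | hz
  · simp
  have hζ0 : ζ ≠ 0 := hζ.ne_zero (NeZero.ne n)
  have hsum : ζ ^ p + ζ ^ q = 1 + ζ ^ r := mul_right_cancel₀ hz (by linear_combination h)
  have hinv : (ζ ^ p)⁻¹ + (ζ ^ q)⁻¹ = 1 + (ζ ^ r)⁻¹ := by
    have := aeval_inv_eq_zero_of_isPrimitiveRoot hζ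
      (P := Polynomial.X ^ p + Polynomial.X ^ q - (1 + Polynomial.X ^ r)) (by simp [hsum])
    simpa [sub_eq_zero] using this
  have hcleared : (ζ ^ p + ζ ^ q) * ζ ^ r = (ζ ^ r + 1) * (ζ ^ p * ζ ^ q) := by
    field_simp at hinv
    linear_combination hinv
  have hprod : (ζ ^ p - 1) * (ζ ^ p - ζ ^ r) * (1 + ζ ^ r) = 0 := by
    linear_combination (ζ ^ p * (1 + ζ ^ r) - ζ ^ r) * hsum + hcleared
  rw [mul_eq_zero, mul_eq_zero, sub_eq_zero, sub_eq_zero] at hprod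
  rcases hprod with (hp | hp) | hr
  · exact .inl (by rw [hp, one_mul])
  · exact .inr (.inl (by rw [hp]))
  · exact .inr (.inr (by linear_combination z * hr))

-- Passing from `ζ` to `ζ⁻¹` in `h` multiplies its right-hand side by `ζ ^ 2`.
lemma pow_eq_one_or_pow_eq_neg_one_of_isPrimitiveRoot {p q : ℕ} [NeZero n]
    (hζ : IsPrimitiveRoot ζ n) (hζ2 : ζ ^ 2 ≠ 1)
    (h : (1 + ζ + ζ ^ 2) * (1 + ζ ^ p) * (1 - ζ ^ q) = (1 - ζ ^ p) * (1 + ζ ^ q)) :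
    ζ ^ p = 1 ∨ ζ ^ q = -1 := by
  have hζ0 : ζ ≠ 0 := hζ.ne_zero (NeZero.ne n)
  have hinv : (1 + ζ + ζ ^ 2) * (1 + ζ ^ p) * (1 - ζ ^ q) =
      ζ ^ 2 * ((1 - ζ ^ p) * (1 + ζ ^ q)) := by
    have := aeval_inv_eq_zero_of_isPrimitiveRoot hζ
      (P := (1 + .X + .X ^ 2) * (1 + .X ^ p) * (1 - .X ^ q) - (1 - .X ^ p) * (1 + .X ^ q))
      (by simp [h])
    simp only [map_sub, map_mul, map_add, map_one, map_pow, Polynomial.aeval_X, inv_pow] at this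
    field_simp at this
    linear_combination -this
  have hprod : (1 - ζ ^ 2) * ((1 - ζ ^ p) * (1 + ζ ^ q)) = 0 := by
    linear_combination hinv - h
  have hprod' := (mul_eq_zero.1 hprod).resolve_left (sub_ne_zero.2 hζ2.symm)
  exact (mul_eq_zero.1 hprod').imp (fun hα ↦ (sub_eq_zero.1 hα).symm) eq_neg_of_add_eq_zero_right

-- Unless `A` or `B` vanishes, the two equations give incompatible values for `A / B`.
lemma eq_zero_or_eq_zero_of_mul_one_add_eq_mul_one_sub {p q : ℕ} (hn : 4 ≤ n)
    (hζ : IsPrimitiveRoot ζ n) {A B : F}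
    (hp : A * (1 - ζ ^ 3) * (1 + ζ ^ p) = B * (ζ - ζ ^ 2) * (1 - ζ ^ p))
    (hq : A * (1 - ζ ^ 2) * (1 + ζ ^ q) = B * (ζ - ζ ^ 3) * (1 - ζ ^ q)) :
    A = 0 ∨ B = 0 := by
  by_contra! ⟨hA, hB⟩
  have : NeZero n := ⟨by omega⟩
  have hζ0 : ζ ≠ 0 := hζ.ne_zero (NeZero.ne n)
  have hζk {k : ℕ} (hk : k ≠ 0) (hk4 : k < 4) : 1 - ζ ^ k ≠ 0 :=
    sub_ne_zero.2 (hζ.pow_ne_one_of_pos_of_lt hk (by omega)).symm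
  have hζ1 : 1 - ζ ≠ 0 := by simpa using hζk (k := 1)
  have hζ2 : 1 - ζ ^ 2 ≠ 0 := hζk (by simp) (by simp)
  have hζ3 : 1 - ζ ^ 3 ≠ 0 := hζk (by simp) (by simp)
  have hp' : A * (1 + ζ + ζ ^ 2) * (1 + ζ ^ p) = B * ζ * (1 - ζ ^ p) :=
    mul_left_cancel₀ hζ1 (by linear_combination hp)
  have hq' : A * (1 + ζ ^ q) = B * ζ * (1 - ζ ^ q) :=
    mul_left_cancel₀ hζ2 (by linear_combination hq)
  have hratio : (1 + ζ + ζ ^ 2) * (1 + ζ ^ p) * (1 - ζ ^ q) = (1 - ζ ^ p) * (1 + ζ ^ q) := by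
    refine mul_left_cancel₀ (mul_ne_zero (mul_ne_zero hA hB) hζ0) ?_
    linear_combination B * ζ * (1 - ζ ^ q) * hp' - B * ζ * (1 - ζ ^ p) * hq'
  rcases pow_eq_one_or_pow_eq_neg_one_of_isPrimitiveRoot hζ (sub_ne_zero.1 hζ2).symm hratio
    with hα | hβ
  · refine mul_ne_zero (mul_ne_zero hA hζ3) two_ne_zero ?_
    rw [hα] at hp
    linear_combination hp
  · refine mul_ne_zero (mul_ne_zero hB (mul_ne_zero hζ0 hζ2)) two_ne_zero ?_
    rw [hβ] at hq
    linear_combination -hq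

end RootsOfUnity

section RootLabelling

variable {ι F : Type*} [Fintype ι] [Field F]

/-- The points at which membership in the coinvariant ideal is tested: the coordinates of `v` are
the `n`-th roots of unity, each occurring once, where `n = Fintype.card ι`. -/
structure IsRootLabelling (v : ι → F) : Prop where
  injective : Function.Injective v
  pow_card_eq_one (i : ι) : v i ^ Fintype.card ι = 1

lemma exists_isRootLabelling_extending {ζ : F} (hζ : IsPrimitiveRoot ζ (Fintype.card ι))
    {κ : Type*} {x : κ → ι} (hx : Function.Injective x) {y : κ → Fin (Fintype.card ι)}
    (hy : Function.Injective y) :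
    ∃ v : ι → F, IsRootLabelling v ∧ ∀ k, v (x k) = ζ ^ (y k : ℕ) := by
  classical
  set f : ι → F := Function.extend x (fun k ↦ ζ ^ (y k : ℕ)) 0
  have hf (k : κ) : f (x k) = ζ ^ (y k : ℕ) := hx.extend_apply ..
  have hmem {z : F} (i : ι) : z ∈ Polynomial.nthRootsFinset (Fintype.card ι) 1 ↔
      z ^ Fintype.card ι = 1 :=
    Polynomial.mem_nthRootsFinset (Fintype.card_pos_iff.2 ⟨i⟩) 1
  have hmaps : Set.MapsTo f (Set.range x)
      ↑(Polynomial.nthRootsFinset (Fintype.card ι) (1 : F)) := by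
    rintro _ ⟨k, rfl⟩
    rw [hf, mem_coe, hmem (x k), pow_right_comm, hζ.pow_eq_one, one_pow]
  have hinj : Set.InjOn f (Set.range x) := by
    rintro _ ⟨k, rfl⟩ _ ⟨l, rfl⟩ hkl
    rw [hf, hf] at hkl
    rw [hy (Fin.ext (hζ.pow_inj (y k).2 (y l).2 hkl))]
  obtain ⟨g, hg⟩ := hmaps.exists_equiv_extend_of_card_eq hζ.card_nthRootsFinset.symm hinj
  exact ⟨fun i ↦ g i, ⟨Subtype.val_injective.comp g.injective, fun i ↦ (hmem i).1 (g i).2⟩,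
    fun k ↦ (hg _ ⟨k, rfl⟩).trans (hf k)⟩

namespace IsRootLabelling

variable {v : ι → F}

lemma comp_perm (hv : IsRootLabelling v) (σ : Equiv.Perm ι) : IsRootLabelling (v ∘ σ) :=
  ⟨hv.injective.comp σ.injective, fun i ↦ hv.pow_card_eq_one (σ i)⟩

lemma map_univ_eq_nthRoots [Nonempty ι] (hv : IsRootLabelling v) :
    univ.val.map v = Polynomial.nthRoots (Fintype.card ι) 1 := by
  refine Multiset.eq_of_le_of_card_le
    ((Multiset.le_iff_subset (univ.nodup.map hv.injective)).2 fun z hz ↦ ?_)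
    (by simpa using Polynomial.card_nthRoots (Fintype.card ι) (1 : F))
  obtain ⟨i, -, rfl⟩ := Multiset.mem_map.1 hz
  exact (Polynomial.mem_nthRoots Fintype.card_pos).2 (hv.pow_card_eq_one i)

variable {R : Type*} [CommRing R] [Algebra R F]

lemma aeval_esymm [Nonempty ι] (hv : IsRootLabelling v) (k : ℕ) :
    aeval v (esymm ι R k) = (Polynomial.nthRoots (Fintype.card ι) (1 : F)).esymm k := by
  rw [aeval_esymm_eq_multiset_esymm, hv.map_univ_eq_nthRoots]

lemma aeval_esymm_eq_zero (hv : IsRootLabelling v) {k : ℕ} (hk : 0 < k)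
    (hk' : k < Fintype.card ι) : aeval v (esymm ι R k) = 0 := by
  have : Nonempty ι := Fintype.card_pos_iff.1 (hk.trans hk')
  rw [hv.aeval_esymm, esymm_nthRoots_one_eq_zero _ hk hk']
  rw [← hv.map_univ_eq_nthRoots, Multiset.card_map, card_val, card_univ]

lemma aeval_eq_zero_of_mem_coinvariantIdeal (hv : IsRootLabelling v) {p : MvPolynomial ι R}
    {m : ℕ} (hm : m < Fintype.card ι) (hp : p.IsHomogeneous m)
    (hmem : p ∈ coinvariantIdeal ι R) : aeval v p = 0 := by
  obtain ⟨q, -, rfl⟩ := exists_eq_sum_mul_esymm_of_mem_coinvariantIdeal hm.le hp hmem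
  rw [map_sum]
  refine sum_eq_zero fun k hk ↦ ?_
  have hk' := mem_Icc.1 hk
  rw [map_mul, hv.aeval_esymm_eq_zero hk'.1 (hk'.2.trans_lt hm), mul_zero]

end IsRootLabelling

lemma exists_forall_aeval_eq_of_mem_coinvariantIdeal [Nonempty ι] {R : Type*} [CommRing R]
    [Algebra R F] {p : MvPolynomial ι R} (hp : p.IsHomogeneous (Fintype.card ι))
    (hmem : p ∈ coinvariantIdeal ι R) :
    ∃ c : F, ∀ v : ι → F, IsRootLabelling v → aeval v p = c := by
  obtain ⟨q, hq, rfl⟩ := exists_eq_sum_mul_esymm_of_mem_coinvariantIdeal le_rfl hp hmem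
  obtain ⟨r, hr⟩ : ∃ r, q (Fintype.card ι) = C r :=
    ⟨_, totalDegree_eq_zero_iff_eq_C.1
      ((totalDegree_zero_iff_isHomogeneous ι).2 (by simpa using hq (Fintype.card ι)))⟩
  refine ⟨algebraMap R F r *
    (Polynomial.nthRoots (Fintype.card ι) (1 : F)).esymm (Fintype.card ι), fun v hv ↦ ?_⟩
  rw [map_sum, sum_eq_single_of_mem _ (right_mem_Icc.2 Fintype.card_pos) fun k hk hne ↦ ?_,
    map_mul, hv.aeval_esymm, hr, aeval_C]
  have hk' := mem_Icc.1 hk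
  rw [map_mul, hv.aeval_esymm_eq_zero hk'.1 (lt_of_le_of_ne hk'.2 hne), mul_zero]

end RootLabelling

section ConstantOffOneIndex

variable {ι α : Type*} [Fintype ι] {a : ι → α}

lemma exists_forall_ne_eq_of_card_le_two [Nonempty ι] (hcard : Fintype.card ι ≤ 2) :
    ∃ i c, ∀ j ≠ i, a j = c := by
  inhabit ι
  by_cases h : ∃ i : ι, i ≠ default
  · obtain ⟨i, hi⟩ := h
    refine ⟨i, a default, fun j hj ↦ ?_⟩
    by_contra hne
    exact hcard.not_gt (Fintype.two_lt_card_iff.2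
      ⟨i, default, j, hi, hj.symm, fun h ↦ hne (congrArg a h.symm)⟩)
  · exact ⟨default, a default, fun j hj ↦ absurd ⟨j, hj⟩ h⟩

lemma exists_forall_ne_eq_of_card_eq_three (hcard : Fintype.card ι = 3)
    (ha : ¬ Function.Injective a) : ∃ i c, ∀ j ≠ i, a j = c := by
  classical
  obtain ⟨i, j, hij, hne⟩ := Function.not_injective_iff.1 ha
  obtain ⟨k, hk⟩ : ∃ k, ({i, j} : Finset ι)ᶜ = {k} := by
    rw [← card_eq_one, card_compl, card_pair hne, hcard]
  refine ⟨k, a i, fun l hl ↦ ?_⟩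
  have hl' : l ∉ ({i, j} : Finset ι)ᶜ := by rwa [hk, mem_singleton]
  simp only [mem_compl, mem_insert, mem_singleton, not_not] at hl'
  rcases hl' with rfl | rfl
  exacts [rfl, hij.symm]

lemma exists_forall_ne_eq_of_four_le_card (hcard : 4 ≤ Fintype.card ι)
    (ha : ∀ i j k l, i ≠ k → i ≠ l → j ≠ k → j ≠ l → a i = a j ∨ a k = a l) :
    ∃ i c, ∀ j ≠ i, a j = c := by
  classical
  by_cases hconst : ∀ i j, a i = a j
  · obtain ⟨i⟩ : Nonempty ι := Fintype.card_pos_iff.1 (by omega)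
    exact ⟨i, a i, fun j _ ↦ hconst j i⟩
  push Not at hconst
  obtain ⟨i, j, hij⟩ := hconst
  obtain ⟨k, hk, l, hl, hkl⟩ : ∃ k ∈ ({i, j} : Finset ι)ᶜ, ∃ l ∈ ({i, j} : Finset ι)ᶜ, k ≠ l := by
    rw [← one_lt_card, card_compl]
    have := card_le_two (a := i) (b := j)
    omega
  simp only [mem_compl, mem_insert, mem_singleton, not_or] at hk hl
  have hoff (m : ι) (hmi : m ≠ i) (hmj : m ≠ j) : a m = a k := by grind
  have hor : a i = a k ∨ a j = a k :=
    hoff l hl.1 hl.2 ▸ ha i k j l (ne_of_apply_ne a hij) (Ne.symm hl.1) hk.2 hkl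
  rcases hor with h | h
  · exact ⟨j, a k, fun m hm ↦ (eq_or_ne m i).elim (fun hmi ↦ hmi ▸ h) fun hmi ↦ hoff m hmi hm⟩
  · exact ⟨i, a k, fun m hm ↦ (eq_or_ne m j).elim (fun hmj ↦ hmj ▸ h) fun hmj ↦ hoff m hm hmj⟩

end ConstantOffOneIndex

section LinearForm

open scoped Matrix

lemma dotProduct_comp_swap {ι R : Type*} [Fintype ι] [DecidableEq ι] [CommRing R]
    (a v : ι → R) (i j : ι) :
    a ⬝ᵥ (v ∘ Equiv.swap i j) = a ⬝ᵥ v - (a i - a j) * (v i - v j) := by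
  rcases eq_or_ne i j with rfl | hij
  · simp
  have hdiff : a ⬝ᵥ v - a ⬝ᵥ (v ∘ Equiv.swap i j) = (a i - a j) * (v i - v j) := by
    simp only [dotProduct, Function.comp_apply]
    rw [← sum_sub_distrib, sum_eq_add i j hij]
    · rw [Equiv.swap_apply_left, Equiv.swap_apply_right]
      ring
    · intro k _ hk
      rw [Equiv.swap_apply_of_ne_of_ne hk.1 hk.2, sub_self]
    · simp
    · simp
  rw [← hdiff, sub_sub_cancel]

variable {ι F : Type*} [Fintype ι] [Field F] {ζ : F} {a : ι → F} {c : F}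

lemma eq_of_forall_dotProduct_eq_zero (hζ : IsPrimitiveRoot ζ (Fintype.card ι))
    (hzero : ∀ v, IsRootLabelling v → a ⬝ᵥ v = 0) (i j : ι) : a i = a j := by
  classical
  obtain ⟨v, hv, -⟩ := exists_isRootLabelling_extending hζ
    (Fintype.equivFin ι).symm.injective Function.injective_id
  have hswap := dotProduct_comp_swap a v i j
  rw [hzero v hv, hzero _ (hv.comp_perm _), zero_sub, zero_eq_neg, mul_eq_zero, sub_eq_zero,
    sub_eq_zero] at hswap
  exact hswap.elim id fun h ↦ congrArg a (hv.injective h)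

lemma not_injective_of_card_eq_three (hcard : Fintype.card ι = 3)
    (hζ : IsPrimitiveRoot ζ (Fintype.card ι))
    (hpow : ∀ v, IsRootLabelling v → (a ⬝ᵥ v) ^ Fintype.card ι = c) :
    ¬ Function.Injective a := by
  classical
  intro ha
  obtain ⟨x⟩ : Nonempty (Fin 3 ≃ ι) := ⟨(Fintype.equivFinOfCardEq hcard).symm⟩
  obtain ⟨v, hv, hvx⟩ := exists_isRootLabelling_extending hζ x.injective
    (Fin.cast_injective hcard.symm)
  have hL : a ⬝ᵥ v = a (x 0) + a (x 1) * ζ + a (x 2) * ζ ^ 2 := by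
    simp [dotProduct, ← x.sum_comp, Fin.sum_univ_three, hvx]
  have hM := dotProduct_comp_swap a v (x 1) (x 2)
  have hLM := (hpow _ (hv.comp_perm (Equiv.swap (x 1) (x 2)))).trans (hpow v hv).symm
  rw [hcard] at hζ hLM
  obtain ⟨p, hp, hM'⟩ := exists_eq_pow_mul_of_pow_eq_pow hζ hLM
  have hvalues : ζ ^ p * (a (x 0) + a (x 1) * ζ + a (x 2) * ζ ^ 2) =
      a (x 0) + a (x 2) * ζ + a (x 1) * ζ ^ 2 := by
    rw [← hL, ← hM', hM, hL, hvx, hvx]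
    simp only [Fin.val_cast, Fin.val_one, Fin.val_two, pow_one]
    ring
  have hne {i j : Fin 3} (hij : i ≠ j) : a (x i) - a (x j) ≠ 0 :=
    fun h ↦ hij (x.injective (ha (sub_eq_zero.1 h)))
  have hζ0 : ζ ≠ 0 := hζ.ne_zero (by simp)
  have hζ1 : 1 - ζ ≠ 0 := sub_ne_zero.2 (hζ.ne_one (by simp)).symm
  have hζ2 : 1 - ζ ^ 2 ≠ 0 := sub_ne_zero.2 (hζ.pow_ne_one_of_pos_of_lt (by simp) (by simp)).symm
  have hζ3 : ζ ^ 3 = 1 := hζ.pow_eq_one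
  interval_cases p
  · refine mul_ne_zero (mul_ne_zero hζ0 hζ1) (hne (i := 1) (j := 2) (by simp)) ?_
    linear_combination hvalues
  · refine mul_ne_zero hζ1 (hne (i := 0) (j := 2) (by simp)) ?_
    linear_combination a (x 2) * hζ3 - hvalues
  · refine mul_ne_zero hζ2 (hne (i := 0) (j := 1) (by simp)) ?_
    linear_combination (a (x 1) + a (x 2) * ζ) * hζ3 - hvalues

variable [CharZero F]

-- The values of the form at `v` and at the points obtained from `v` by swapping `i, j`, `k, l` and
-- both pairs are the vertices of a parallelogram and have the same `n`-th power.
lemma exists_mul_one_add_eq_mul_one_sub (hζ : IsPrimitiveRoot ζ (Fintype.card ι))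
    (hpow : ∀ v, IsRootLabelling v → (a ⬝ᵥ v) ^ Fintype.card ι = c) {v : ι → F}
    (hv : IsRootLabelling v) {i j k l : ι} (hik : i ≠ k) (hil : i ≠ l) (hjk : j ≠ k)
    (hjl : j ≠ l) (hij : a i ≠ a j) (hkl : a k ≠ a l) :
    ∃ p : ℕ, (a i - a j) * (v i - v j) * (1 + ζ ^ p) =
      (a k - a l) * (v k - v l) * (1 - ζ ^ p) := by
  classical
  have : NeZero (Fintype.card ι) := ⟨(Fintype.card_pos_iff.2 ⟨i⟩).ne'⟩
  have hne {i j : ι} (h : a i ≠ a j) : (a i - a j) * (v i - v j) ≠ 0 :=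
    mul_ne_zero (sub_ne_zero.2 h) (sub_ne_zero.2 (hv.injective.ne (mt (congrArg a) h)))
  set s : Equiv.Perm ι := Equiv.swap i j
  set t : Equiv.Perm ι := Equiv.swap k l
  have hpow_eq (σ : Equiv.Perm ι) :
      (a ⬝ᵥ (v ∘ σ)) ^ Fintype.card ι = (a ⬝ᵥ v) ^ Fintype.card ι :=
    (hpow _ (hv.comp_perm σ)).trans (hpow v hv).symm
  have hs : a ⬝ᵥ (v ∘ s) = a ⬝ᵥ v - (a i - a j) * (v i - v j) := dotProduct_comp_swap a v i j
  have ht : a ⬝ᵥ (v ∘ t) = a ⬝ᵥ v - (a k - a l) * (v k - v l) := dotProduct_comp_swap a v k l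
  have hst : a ⬝ᵥ (v ∘ ⇑(s * t)) =
      a ⬝ᵥ v - (a i - a j) * (v i - v j) - (a k - a l) * (v k - v l) := by
    rw [Equiv.Perm.coe_mul, ← Function.comp_assoc, dotProduct_comp_swap, hs,
      Function.comp_apply, Function.comp_apply, Equiv.swap_apply_of_ne_of_ne hik.symm hjk.symm,
      Equiv.swap_apply_of_ne_of_ne hil.symm hjl.symm]
  have hsum : a ⬝ᵥ (v ∘ s) + a ⬝ᵥ (v ∘ t) = a ⬝ᵥ v + a ⬝ᵥ (v ∘ ⇑(s * t)) := by
    rw [hs, ht, hst]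
    ring
  obtain ⟨p, -, hp⟩ := exists_eq_pow_mul_of_pow_eq_pow hζ (hpow_eq s)
  refine ⟨p, ?_⟩
  rcases eq_or_eq_or_add_eq_zero_of_pow_eq_pow hζ (hpow_eq s) (hpow_eq t) (hpow_eq (s * t)) hsum
    with h | h | h
  · exact absurd (by linear_combination hs - h) (hne hij)
  · exact absurd (by linear_combination h + hst - hs) (hne hkl)
  · have hA : (a i - a j) * (v i - v j) = (1 - ζ ^ p) * a ⬝ᵥ v := by
      linear_combination hs - hp
    have hB : (a k - a l) * (v k - v l) = (1 + ζ ^ p) * a ⬝ᵥ v := by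
      linear_combination hst - h - hA
    rw [hA, hB]
    ring

lemma exists_mul_pow_sub_pow_mul_one_add_eq (hζ : IsPrimitiveRoot ζ (Fintype.card ι))
    (hpow : ∀ v, IsRootLabelling v → (a ⬝ᵥ v) ^ Fintype.card ι = c)
    (hcard : 4 ≤ Fintype.card ι) {x : Fin 4 → ι} (hx : Function.Injective x)
    (h01 : a (x 0) ≠ a (x 1)) (h23 : a (x 2) ≠ a (x 3)) {y : Fin 4 → Fin 4}
    (hy : Function.Injective y) :
    ∃ p : ℕ, (a (x 0) - a (x 1)) * (ζ ^ (y 0 : ℕ) - ζ ^ (y 1 : ℕ)) * (1 + ζ ^ p) =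
      (a (x 2) - a (x 3)) * (ζ ^ (y 2 : ℕ) - ζ ^ (y 3 : ℕ)) * (1 - ζ ^ p) := by
  obtain ⟨v, hv, hvx⟩ := exists_isRootLabelling_extending hζ hx
    ((Fin.castLE_injective hcard).comp hy)
  simpa only [hvx, Function.comp_apply, Fin.val_castLE] using
    exists_mul_one_add_eq_mul_one_sub hζ hpow hv (hx.ne (by simp)) (hx.ne (by simp))
      (hx.ne (by simp)) (hx.ne (by simp)) h01 h23

lemma eq_or_eq_of_forall_dotProduct_pow_eq (hζ : IsPrimitiveRoot ζ (Fintype.card ι))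
    (hpow : ∀ v, IsRootLabelling v → (a ⬝ᵥ v) ^ Fintype.card ι = c)
    (hcard : 4 ≤ Fintype.card ι) {i j k l : ι} (hik : i ≠ k) (hil : i ≠ l) (hjk : j ≠ k)
    (hjl : j ≠ l) : a i = a j ∨ a k = a l := by
  by_contra! ⟨hij, hkl⟩
  have hx : Function.Injective ![i, j, k, l] := by
    have := ne_of_apply_ne a hij
    have := ne_of_apply_ne a hkl
    intro s t
    fin_cases s <;> fin_cases t <;> simp_all [eq_comm]
  obtain ⟨p, hp⟩ : ∃ p : ℕ, (a i - a j) * (1 - ζ ^ 3) * (1 + ζ ^ p) =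
      (a k - a l) * (ζ - ζ ^ 2) * (1 - ζ ^ p) := by
    simpa using exists_mul_pow_sub_pow_mul_one_add_eq hζ hpow hcard hx hij hkl
      (y := ![0, 3, 1, 2]) (by decide)
  obtain ⟨q, hq⟩ : ∃ q : ℕ, (a i - a j) * (1 - ζ ^ 2) * (1 + ζ ^ q) =
      (a k - a l) * (ζ - ζ ^ 3) * (1 - ζ ^ q) := by
    simpa using exists_mul_pow_sub_pow_mul_one_add_eq hζ hpow hcard hx hij hkl
      (y := ![0, 2, 1, 3]) (by decide)
  exact (eq_zero_or_eq_zero_of_mul_one_add_eq_mul_one_sub hcard hζ hp hq).elim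
    (sub_ne_zero.2 hij) (sub_ne_zero.2 hkl)

lemma exists_forall_ne_eq_of_forall_dotProduct_pow_eq [Nonempty ι]
    (hζ : IsPrimitiveRoot ζ (Fintype.card ι))
    (hpow : ∀ v, IsRootLabelling v → (a ⬝ᵥ v) ^ Fintype.card ι = c) :
    ∃ i d, ∀ j ≠ i, a j = d := by
  rcases lt_trichotomy (Fintype.card ι) 3 with hcard | hcard | hcard
  · exact exists_forall_ne_eq_of_card_le_two (Nat.le_of_lt_succ hcard)
  · exact exists_forall_ne_eq_of_card_eq_three hcard (not_injective_of_card_eq_three hcard hζ hpow)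
  · exact exists_forall_ne_eq_of_four_le_card hcard fun _ _ _ _ ↦
      eq_or_eq_of_forall_dotProduct_pow_eq hζ hpow hcard

end LinearForm

section PowersOfLinearForms

open scoped Matrix

lemma isHomogeneous_sum_C_mul_X_pow {ι R : Type*} [Fintype ι] [CommSemiring R] (a : ι → R)
    (m : ℕ) : ((∑ i, C (a i) * X i) ^ m).IsHomogeneous m := by
  simpa using (IsHomogeneous.sum univ _ 1 fun i _ ↦ isHomogeneous_C_mul_X (a i) i).pow m

lemma aeval_sum_C_mul_X_pow {ι R A : Type*} [Fintype ι] [CommSemiring R] [CommSemiring A]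
    [Algebra R A] (a : ι → R) (v : ι → A) (m : ℕ) :
    aeval v ((∑ i, C (a i) * X i) ^ m) = ((algebraMap R A ∘ a) ⬝ᵥ v) ^ m := by
  simp [dotProduct]

variable {ι R F : Type*} [Fintype ι] [Nonempty ι] [CommRing R] [Field F] [Algebra R F]
  [FaithfulSMul R F] {ζ : F} {a : ι → R}

lemma eq_of_pow_card_sub_one_mem_coinvariantIdeal (hζ : IsPrimitiveRoot ζ (Fintype.card ι))
    (hmem : (∑ i, C (a i) * X i) ^ (Fintype.card ι - 1) ∈ coinvariantIdeal ι R) (i j : ι) :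
    a i = a j := by
  refine FaithfulSMul.algebraMap_injective R F
    (eq_of_forall_dotProduct_eq_zero (a := algebraMap R F ∘ a) hζ (fun v hv ↦ ?_) i j)
  have hpow := hv.aeval_eq_zero_of_mem_coinvariantIdeal (Nat.sub_one_lt Fintype.card_ne_zero)
    (isHomogeneous_sum_C_mul_X_pow a _) hmem
  rw [aeval_sum_C_mul_X_pow] at hpow
  exact eq_zero_of_pow_eq_zero hpow

lemma exists_forall_ne_eq_of_pow_card_mem_coinvariantIdeal [CharZero F]
    (hζ : IsPrimitiveRoot ζ (Fintype.card ι))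
    (hmem : (∑ i, C (a i) * X i) ^ Fintype.card ι ∈ coinvariantIdeal ι R) :
    ∃ i c, ∀ j ≠ i, a j = c := by
  obtain ⟨c, hc⟩ := exists_forall_aeval_eq_of_mem_coinvariantIdeal (F := F)
    (isHomogeneous_sum_C_mul_X_pow a _) hmem
  simp only [aeval_sum_C_mul_X_pow] at hc
  obtain ⟨i, d, hd⟩ := exists_forall_ne_eq_of_forall_dotProduct_pow_eq hζ hc
  by_cases h : ∃ j, j ≠ i
  · obtain ⟨j, hj⟩ := h
    exact ⟨i, a j, fun k hk ↦
      FaithfulSMul.algebraMap_injective R F ((hd k hk).trans (hd j hj).symm)⟩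
  · exact ⟨i, a i, fun j hj ↦ absurd ⟨j, hj⟩ h⟩

end PowersOfLinearForms

theorem stmt10_general {ι R : Type*} [Fintype ι] [CommRing R] [IsDomain R] [CharZero R]
    (a : ι → R) :
    (Ideal.Quotient.mk (coinvariantIdeal ι R) (∑ i, C (a i) * X i) ^ (Fintype.card ι - 1) = 0 →
      Ideal.Quotient.mk (coinvariantIdeal ι R) (∑ i, C (a i) * X i) = 0) ∧
    (Ideal.Quotient.mk (coinvariantIdeal ι R) (∑ i, C (a i) * X i) ^ Fintype.card ι = 0 ↔
      ∃ i, ∃ c : R, Ideal.Quotient.mk (coinvariantIdeal ι R) (∑ i, C (a i) * X i) =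
        c • Ideal.Quotient.mk (coinvariantIdeal ι R) (X i)) := by
  rcases isEmpty_or_nonempty ι with hι | hι
  · have hbot : coinvariantIdeal ι R = ⊥ := by simp [coinvariantIdeal]
    have : Nontrivial (MvPolynomial ι R ⧸ coinvariantIdeal ι R) :=
      Ideal.Quotient.nontrivial_iff.2 (hbot ▸ bot_ne_top)
    simp
  have : NeZero (Fintype.card ι) := ⟨Fintype.card_ne_zero⟩
  have : FaithfulSMul R (AlgebraicClosure (FractionRing R)) :=
    FaithfulSMul.trans R (FractionRing R) _
  obtain ⟨ζ, hζ⟩ := HasEnoughRootsOfUnity.exists_primitiveRoot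
    (AlgebraicClosure (FractionRing R)) (Fintype.card ι)
  simp only [← map_pow, Ideal.Quotient.eq_zero_iff_mem]
  refine ⟨fun hmem ↦ ?_, fun hmem ↦ ?_, ?_⟩
  · have ha := eq_of_pow_card_sub_one_mem_coinvariantIdeal hζ hmem
    obtain ⟨i⟩ := hι
    rw [← Ideal.Quotient.eq_zero_iff_mem, mk_sum_C_mul_X_eq_smul_mk_X fun j _ ↦ ha j i, sub_self,
      zero_smul]
  · obtain ⟨i, c, hc⟩ := exists_forall_ne_eq_of_pow_card_mem_coinvariantIdeal hζ hmem
    exact ⟨i, a i - c, mk_sum_C_mul_X_eq_smul_mk_X hc⟩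
  · rintro ⟨i, c, hc⟩
    rw [← Ideal.Quotient.eq_zero_iff_mem, map_pow, hc, smul_pow, ← map_pow,
      Ideal.Quotient.eq_zero_iff_mem.2 (X_pow_card_mem_coinvariantIdeal i), smul_zero]

/-- in `R = ℤ[x_1,...,x_n]/⟨e_1,...,e_n⟩`, every degree-one element `f` has
nilpotence order at least `n` (`f^{n-1} ≠ 0` unless `f = 0`), and `f^n = 0` iff `f` is an
integer multiple of the image of one of the variables. -/
theorem stmt10 (n : ℕ) (a : Fin n → ℤ)
    (J : Ideal (MvPolynomial (Fin n) ℤ))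
    (hJ : J = Ideal.span (Set.range fun i : Fin n => esymm (Fin n) ℤ ((i : ℕ) + 1))) :
    ((Ideal.Quotient.mk J (∑ i, C (a i) * X i)) ^ (n - 1) = 0 →
      Ideal.Quotient.mk J (∑ i, C (a i) * X i) = 0) ∧
    ((Ideal.Quotient.mk J (∑ i, C (a i) * X i)) ^ n = 0 ↔
      ∃ i : Fin n, ∃ c : ℤ,
        Ideal.Quotient.mk J (∑ i, C (a i) * X i) = c • Ideal.Quotient.mk J (X i)) := by
  obtain rfl := hJ.trans (coinvariantIdeal_fin_eq_span_range n).symm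
  simpa using stmt10_general a
end

section
/- Let λ be a partition with λ_1 = k and λ_i ≥ i+1 for all i (indecomposability), and let i ≤ n with p := λ_i. Then in R^λ = Z[x_1,...,x_n]/I_λ, the image of x_i satisfies x_i^p = 0 but x_i^{p-1} ≠ 0; that is, x_i has nilpotence order exactly λ_i. -/
open MvPolynomial Finset

/-!
Write `h_m(S)` for the complete homogeneous sum of degree `m` in the `x_b`, `b ∈ S`, and
`d_j = λ_j - j` (0-indexed). From `h_{m+1}(S ∪ {a}) = x_a h_m(S ∪ {a}) + h_{m+1}(S)` the relations
`h_{d_j}(x_0, ..., x_j) = 0` propagate to all degrees `≥ d_j`. Removing the variables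
`x_0, ..., x_{i-1}` from `h_m(x_0, ..., x_i)` one at a time, each removal of an `x_b` raises the
vanishing degree by one and multiplies the last value before it by `-x_b`; at the end
`h_m(x_i) = x_i ^ m` is left. Hence `x_i ^ λ_i = 0` and
`x_i ^ (λ_i - 1) = ± x_0 ⋯ x_{i-1} h_{d_i - 1}(x_0, ..., x_i)`.

The right-hand side is nonzero because `R^λ` is an iterated extension: `h_{d_j}(x_0, ..., x_j)` is
monic of degree `d_j` in `x_j`, so adjoining `x_j` gives a free extension with basis
`1, x_j, ..., x_j ^ (d_j - 1)`, in which a nonzero constant times a monic polynomial in `x_j` of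
degree less than `d_j` cannot vanish. That polynomial is `x_j` for `j < i`, of degree `1 < d_j` by
indecomposability; it is `h_{d_i - 1}(x_0, ..., x_i)` for `j = i`, and `1` for `j > i`.
-/

universe u

open Function

section CompleteHomog

variable {ι A B : Type*} [DecidableEq ι]

section CommSemiring

variable [CommSemiring A] [CommSemiring B]

/-- The complete homogeneous sum of degree `m` in the values `x b`, `b ∈ S`. Evaluating in an
arbitrary ring lets one notion cover `hh` (the case `x = X`) and its images in quotients of the
polynomial ring. -/
def completeHomog (S : Finset ι) (x : ι → A) (m : ℕ) : A :=
  ∑ s ∈ S.sym m, ((s : Multiset ι).map x).prod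

@[simp]
lemma completeHomog_zero (S : Finset ι) (x : ι → A) : completeHomog S x 0 = 1 := by
  rw [completeHomog, sym_zero, sum_singleton]
  exact Multiset.prod_zero

@[simp]
lemma completeHomog_singleton (a : ι) (x : ι → A) (m : ℕ) :
    completeHomog {a} x m = x a ^ m := by
  simp [completeHomog, sym_singleton, Sym.coe_replicate]

@[simp]
lemma completeHomog_empty_succ (x : ι → A) (m : ℕ) : completeHomog ∅ x (m + 1) = 0 := by
  simp [completeHomog]

lemma completeHomog_congr {S : Finset ι} {x y : ι → A} (h : ∀ b ∈ S, x b = y b) (m : ℕ) :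
    completeHomog S x m = completeHomog S y m :=
  sum_congr rfl fun _ hs => congrArg Multiset.prod <|
    Multiset.map_congr rfl fun b hb => h b (mem_sym_iff.1 hs b hb)

lemma map_completeHomog (f : A →+* B) (S : Finset ι) (x : ι → A) (m : ℕ) :
    f (completeHomog S x m) = completeHomog S (f ∘ x) m := by
  simp [completeHomog, map_multiset_prod]

lemma completeHomog_insert_succ {a : ι} {S : Finset ι} (ha : a ∉ S) (x : ι → A) (m : ℕ) :
    completeHomog (insert a S) x (m + 1) =
      x a * completeHomog (insert a S) x m + completeHomog S x (m + 1) := by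
  have sum_mem : ∑ s ∈ (insert a S).sym (m + 1) with a ∈ s, ((s : Multiset ι).map x).prod =
      x a * completeHomog (insert a S) x m := by
    rw [completeHomog, mul_sum]
    refine (sum_nbij (a ::ₛ ·) ?_ (fun s _ t _ h => by simpa using h) ?_
      (by simp [Sym.coe_cons])).symm
    · simp only [mem_filter, mem_sym_iff, Sym.mem_cons]
      grind
    · intro s hs
      obtain ⟨hs, has⟩ := mem_filter.1 hs
      exact ⟨s.erase a has, mem_sym_iff.2 fun b hb =>
        mem_sym_iff.1 hs b (Multiset.mem_of_mem_erase hb), by simp⟩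
  have filter_notMem : {s ∈ (insert a S).sym (m + 1) | a ∉ s} = S.sym (m + 1) := by
    ext s
    simp only [mem_filter, mem_sym_iff]
    grind
  rw [← sum_mem, completeHomog, completeHomog, ← filter_notMem, sum_filter_add_sum_filter_not]

lemma completeHomog_insert_eq_zero_of_le {a : ι} {S : Finset ι} (ha : a ∉ S) {x : ι → A} {d : ℕ}
    (hd : completeHomog (insert a S) x d = 0) (hS : ∀ m, d < m → completeHomog S x m = 0) {m : ℕ}
    (hm : d ≤ m) : completeHomog (insert a S) x m = 0 := by
  induction m, hm using Nat.le_induction with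
  | base => exact hd
  | succ m hm ih =>
    rw [completeHomog_insert_succ ha, ih, hS _ (Nat.lt_succ_of_le hm), mul_zero, add_zero]

end CommSemiring

section CommRing

variable [CommRing A]

lemma completeHomog_of_union_eq_zero {S U : Finset ι} (hSU : Disjoint U S) (x : ι → A) {D : ℕ}
    (h : ∀ m, D < m → completeHomog (U ∪ S) x m = 0) :
    (∀ m, D + #S < m → completeHomog U x m = 0) ∧
      completeHomog U x (D + #S) = (∏ b ∈ S, -x b) * completeHomog (U ∪ S) x D := by
  induction S using Finset.induction_on generalizing D with
  | empty => simpa using h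
  | insert b S hb ih =>
    obtain ⟨hbU, hSU⟩ := disjoint_insert_right.1 hSU
    rw [union_insert] at h ⊢
    have remove (m : ℕ) : completeHomog (U ∪ S) x (m + 1) =
        completeHomog (insert b (U ∪ S)) x (m + 1)
          - x b * completeHomog (insert b (U ∪ S)) x m :=
      eq_sub_of_add_eq' (completeHomog_insert_succ (by simp [hb, hbU]) x m).symm
    have vanish (m : ℕ) (hm : D + 1 < m) : completeHomog (U ∪ S) x m = 0 := by
      obtain ⟨m, rfl⟩ := Nat.exists_eq_add_one_of_ne_zero (Nat.ne_zero_of_lt hm)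
      rw [remove, h _ (by lia), h _ (by lia), mul_zero, sub_zero]
    have top : completeHomog (U ∪ S) x (D + 1) =
        -x b * completeHomog (insert b (U ∪ S)) x D := by
      rw [remove, h _ (by lia)]
      ring
    rw [card_insert_of_notMem hb, prod_insert hb, add_comm #S, ← add_assoc]
    refine ⟨(ih hSU vanish).1, ?_⟩
    rw [(ih hSU vanish).2, top]
    ring

end CommRing

end CompleteHomog

section AdjoinVariable

open Polynomial (IsMonicOfDegree)

variable {ι A : Type*} [CommRing A]

lemma isMonicOfDegree_completeHomog [DecidableEq ι] [Nontrivial A] {k : ι} {S : Finset ι}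
    (hk : k ∉ S) (x : ι → A) (m : ℕ) :
    IsMonicOfDegree
      (completeHomog (insert k S) (update (Polynomial.C ∘ x) k Polynomial.X) m) m := by
  induction m with
  | zero => simp [Polynomial.isMonicOfDegree_zero_iff]
  | succ m ih =>
    have const : completeHomog S (update (Polynomial.C ∘ x) k Polynomial.X) (m + 1) =
        Polynomial.C (completeHomog S x (m + 1)) := by
      rw [map_completeHomog]
      exact completeHomog_congr (fun b hb => update_of_ne (ne_of_mem_of_not_mem hb hk) _ _) _
    rw [completeHomog_insert_succ hk, const, update_self, add_comm m]
    exact ((Polynomial.isMonicOfDegree_X A).mul ih).add_right (by simp)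

lemma adjoinRoot_of_mul_mk_ne_zero {f g : Polynomial A} {d m : ℕ} (hf : IsMonicOfDegree f d)
    (hg : IsMonicOfDegree g m) (hmd : m < d) {c : A} (hc : c ≠ 0) :
    AdjoinRoot.of f c * AdjoinRoot.mk f g ≠ 0 := by
  rw [← AdjoinRoot.mk_C, ← map_mul]
  refine AdjoinRoot.mk_ne_zero_of_natDegree_lt hf.monic
    (hg.monic.mul_left_ne_zero (Polynomial.C_ne_zero.2 hc)) ?_
  calc (Polynomial.C c * g).natDegree ≤ g.natDegree := Polynomial.natDegree_C_mul_le c g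
    _ < f.natDegree := by rwa [hf.natDegree_eq, hg.natDegree_eq]

lemma exists_extension_completeHomog_eq_zero {R : Type*} {A : Type u} [CommRing R] [CommRing A]
    [Nontrivial A] [Algebra R A] [DecidableEq ι] {k : ι} {S : Finset ι} (hk : k ∉ S)
    (x : ι → A) (d : ℕ) :
    ∃ (B : Type u) (_ : CommRing B) (_ : Algebra R B) (φ : A →+* B) (y : ι → B),
      (∀ b, b ≠ k → y b = φ (x b)) ∧ completeHomog (insert k S) y d = 0 ∧
      ∀ c, c ≠ 0 → (1 < d → φ c * y k ≠ 0) ∧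
        ∀ m < d, φ c * completeHomog (insert k S) y m ≠ 0 := by
  set X' : ι → Polynomial A := update (Polynomial.C ∘ x) k Polynomial.X with hX'
  have hmonic := isMonicOfDegree_completeHomog hk x
  set f := completeHomog (insert k S) X' d
  refine ⟨AdjoinRoot f, inferInstance, inferInstance, AdjoinRoot.of f, AdjoinRoot.mk f ∘ X',
    fun b hb => by simp [hX', hb], ?_, fun c hc => ⟨fun hd => ?_, fun m hm => ?_⟩⟩
  · rw [← map_completeHomog]
    exact AdjoinRoot.mk_self
  · rw [comp_apply, hX', update_self]
    exact adjoinRoot_of_mul_mk_ne_zero (hmonic d) (Polynomial.isMonicOfDegree_X A) hd hc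
  · rw [← map_completeHomog]
    exact adjoinRoot_of_mul_mk_ne_zero (hmonic d) (hmonic m) hm hc

end AdjoinVariable

section FirstVariables

variable {n : ℕ}

@[simp]
lemma mem_fv {j : ℕ} {b : Fin n} : b ∈ fv n j ↔ (b : ℕ) < j := by
  simp [fv]

lemma fv_zero : fv n 0 = ∅ := by
  simp [fv]

lemma fv_succ (k : Fin n) : fv n (k + 1) = insert k (fv n k) := by
  ext b
  simp only [mem_fv, mem_insert, Fin.ext_iff]
  lia

lemma notMem_fv (k : Fin n) : k ∉ fv n k := by
  simp

lemma card_fv (k : Fin n) : #(fv n k) = k := by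
  rw [fv, Fin.card_filter_val_lt, min_eq_right k.is_lt.le]

lemma prod_neg_fv_eq_map {A B : Type*} [CommRing A] [CommRing B] {φ : A →+* B} {x : Fin n → A}
    {y : Fin n → B} {k : Fin n} (h : ∀ b < k, y b = φ (x b)) :
    ∏ b ∈ fv n k, -y b = φ (∏ b ∈ fv n k, -x b) := by
  rw [map_prod]
  exact prod_congr rfl fun b hb => by rw [h b (mem_fv.1 hb), map_neg]

end FirstVariables

section Solutions

variable {n : ℕ} {lam : Fin n → ℕ} {A : Type*} [CommRing A]

/-- The first `j` defining relations `h_{λ_k - k}(x_0, ..., x_k) = 0` of `R^λ`, with `λ` indexed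
from `0`, hold for the tuple `x`. For `j = n` such tuples are the `A`-valued points of `R^λ`. -/
def SolvesUpTo (lam : Fin n → ℕ) (x : Fin n → A) (j : ℕ) : Prop :=
  ∀ k : Fin n, (k : ℕ) < j → completeHomog (fv n (k + 1)) x (lam k - k) = 0

namespace SolvesUpTo

lemma mono {x : Fin n → A} {j l : ℕ} (hx : SolvesUpTo lam x l) (hjl : j ≤ l) :
    SolvesUpTo lam x j :=
  fun k hk => hx k (hk.trans_le hjl)

lemma succ {B : Type*} [CommRing B] {x : Fin n → A} {y : Fin n → B} {k : Fin n}
    (hx : SolvesUpTo lam x k) (φ : A →+* B) (hy : ∀ b < k, y b = φ (x b))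
    (hk : completeHomog (fv n (k + 1)) y (lam k - k) = 0) : SolvesUpTo lam y (k + 1) := by
  intro l hl
  rcases Nat.lt_succ_iff_lt_or_eq.1 hl with hlk | hlk
  · have agree : ∀ b ∈ fv n (l + 1), y b = (φ ∘ x) b := fun b hb =>
      hy b (by have := mem_fv.1 hb; lia)
    rw [completeHomog_congr agree, ← map_completeHomog, hx l hlk, map_zero]
  · rwa [Fin.ext hlk]

lemma completeHomog_eq_zero {x : Fin n → A} {j : ℕ} (hx : SolvesUpTo lam x j)
    (hmono : Monotone lam) {k : Fin n} (hk : (k : ℕ) < j) {m : ℕ} (hm : lam k ≤ m + k) :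
    completeHomog (fv n (k + 1)) x m = 0 := by
  obtain ⟨k, hkn⟩ := k
  induction k generalizing m with
  | zero =>
    have base := hx ⟨0, hkn⟩ hk
    rw [fv_succ] at base ⊢
    refine completeHomog_insert_eq_zero_of_le (notMem_fv _) base (fun m hm => ?_)
      (Nat.sub_le_iff_le_add.2 hm)
    obtain ⟨m, rfl⟩ := Nat.exists_eq_add_one_of_ne_zero (Nat.ne_zero_of_lt hm)
    rw [fv_zero, completeHomog_empty_succ]
  | succ k ih =>
    have base := hx ⟨k + 1, hkn⟩ hk
    rw [fv_succ] at base ⊢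
    refine completeHomog_insert_eq_zero_of_le (notMem_fv _) base (fun m hm => ?_)
      (Nat.sub_le_iff_le_add.2 hm)
    have hle : lam ⟨k, k.lt_succ_self.trans hkn⟩ ≤ lam ⟨k + 1, hkn⟩ := hmono (by simp)
    exact ih (k.lt_succ_self.trans hkn) (k.lt_succ_self.trans hk) (by lia)

lemma pow_eq_zero_and_pow_pred_eq {x : Fin n → A} {i : Fin n} (hx : SolvesUpTo lam x (i + 1))
    (hmono : Monotone lam) (hi : (i : ℕ) < lam i) :
    x i ^ lam i = 0 ∧ x i ^ (lam i - 1) =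
      (∏ b ∈ fv n i, -x b) * completeHomog (fv n (i + 1)) x (lam i - 1 - i) := by
  have hunion : {i} ∪ fv n i = fv n (i + 1) := by rw [fv_succ, insert_eq]
  have vanish : ∀ m, lam i - 1 - i < m → completeHomog ({i} ∪ fv n i) x m = 0 := fun m hm => by
    rw [hunion]
    exact hx.completeHomog_eq_zero hmono i.val.lt_succ_self (by lia)
  have key := completeHomog_of_union_eq_zero (disjoint_singleton_left.2 (notMem_fv i)) x vanish
  rw [card_fv, hunion, show lam i - 1 - i + i = lam i - 1 by lia] at key
  simp only [completeHomog_singleton] at key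
  exact ⟨key.1 _ (by lia), key.2⟩

section Existence

variable (R : Type u) [CommRing R]

lemma exists_succ {A : Type u} [CommRing A] [Nontrivial A] [Algebra R A] {x : Fin n → A}
    {k : Fin n} (hx : SolvesUpTo lam x k) :
    ∃ (B : Type u) (_ : CommRing B) (_ : Algebra R B) (φ : A →+* B) (y : Fin n → B),
      SolvesUpTo lam y (k + 1) ∧ (∀ b < k, y b = φ (x b)) ∧
      ∀ c, c ≠ 0 → (1 < lam k - k → φ c * y k ≠ 0) ∧
        ∀ m < lam k - k, φ c * completeHomog (fv n (k + 1)) y m ≠ 0 := by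
  obtain ⟨B, hB, hRB, φ, y, hy, hzero, hne⟩ :=
    exists_extension_completeHomog_eq_zero (R := R) (notMem_fv k) x (lam k - k)
  rw [← fv_succ] at hzero hne
  exact ⟨B, hB, hRB, φ, y, hx.succ φ (fun b hb => hy b hb.ne) hzero, fun b hb => hy b hb.ne, hne⟩

variable [Nontrivial R]

lemma exists_prod_neg_ne_zero {j : ℕ} (hj : j ≤ n)
    (hind : ∀ k : Fin n, (k : ℕ) < j → (k : ℕ) + 2 ≤ lam k) :
    ∃ (A : Type u) (_ : CommRing A) (_ : Algebra R A) (x : Fin n → A),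
      SolvesUpTo lam x j ∧ ∏ b ∈ fv n j, -x b ≠ 0 := by
  induction j with
  | zero =>
    exact ⟨R, inferInstance, inferInstance, 0, fun k hk => absurd hk (Nat.not_lt_zero k),
      by simp [fv_zero]⟩
  | succ j ih =>
    obtain ⟨A, _, _, x, hx, hprod⟩ :=
      ih (Nat.le_of_succ_le hj) fun k hk => hind k (Nat.lt_succ_of_lt hk)
    have : Nontrivial A := ⟨_, _, hprod⟩
    obtain ⟨B, hB, hRB, φ, y, hy, hyx, hne⟩ := exists_succ R (k := ⟨j, hj⟩) hx
    refine ⟨B, hB, hRB, y, hy, ?_⟩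
    rw [fv_succ ⟨j, hj⟩, prod_insert (notMem_fv _), prod_neg_fv_eq_map hyx, neg_mul,
      neg_ne_zero, mul_comm]
    exact (hne _ hprod).1 (by have := hind ⟨j, hj⟩ j.lt_succ_self; lia)

lemma exists_pow_pred_ne_zero_of_succ (hmono : Monotone lam) {i : Fin n} (hi : (i : ℕ) < lam i)
    (hind : ∀ k < i, (k : ℕ) + 2 ≤ lam k) :
    ∃ (A : Type u) (_ : CommRing A) (_ : Algebra R A) (x : Fin n → A),
      SolvesUpTo lam x (i + 1) ∧ x i ^ (lam i - 1) ≠ 0 := by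
  obtain ⟨A, _, _, x, hx, hprod⟩ := exists_prod_neg_ne_zero R i.is_lt.le hind
  have : Nontrivial A := ⟨_, _, hprod⟩
  obtain ⟨B, hB, hRB, φ, y, hy, hyx, hne⟩ := exists_succ R hx
  refine ⟨B, hB, hRB, y, hy, ?_⟩
  rw [(hy.pow_eq_zero_and_pow_pred_eq hmono hi).2, prod_neg_fv_eq_map hyx]
  exact (hne _ hprod).2 _ (by lia)

lemma exists_pow_pred_ne_zero (hmono : Monotone lam) (hlam : ∀ k : Fin n, (k : ℕ) < lam k)
    {i : Fin n} (hind : ∀ k < i, (k : ℕ) + 2 ≤ lam k) :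
    ∃ (A : Type u) (_ : CommRing A) (_ : Algebra R A) (x : Fin n → A),
      SolvesUpTo lam x n ∧ x i ^ (lam i - 1) ≠ 0 := by
  suffices ∀ j, (i : ℕ) + 1 ≤ j → j ≤ n → ∃ (A : Type u) (_ : CommRing A) (_ : Algebra R A)
      (x : Fin n → A), SolvesUpTo lam x j ∧ x i ^ (lam i - 1) ≠ 0 from this n i.is_lt le_rfl
  intro j hij
  induction j, hij using Nat.le_induction with
  | base => exact fun _ => exists_pow_pred_ne_zero_of_succ R hmono (hlam i) hind
  | succ j hij ih =>
    intro hj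
    obtain ⟨A, _, _, x, hx, hpow⟩ := ih (Nat.le_of_succ_le hj)
    have : Nontrivial A := ⟨_, _, hpow⟩
    obtain ⟨B, hB, hRB, φ, y, hy, hyx, hne⟩ := exists_succ R (k := ⟨j, hj⟩) hx
    refine ⟨B, hB, hRB, y, hy, ?_⟩
    have hφ := (hne _ hpow).2 0 (Nat.sub_pos_of_lt (hlam _))
    rwa [completeHomog_zero, mul_one, map_pow, ← hyx i hij] at hφ

end Existence

end SolvesUpTo

end Solutions

section PartitionIdeal

variable {n : ℕ} {lam : Fin n → ℕ} {R : Type u} [CommRing R]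

/-- The ideal `I_λ` over an arbitrary base ring `R`, with `λ` and the variables indexed from `0`;
the degree `λ_j - j + 1` of the `1`-indexed definition becomes `lam j - j`. -/
noncomputable def partitionIdeal (R : Type*) [CommRing R] (lam : Fin n → ℕ) :
    Ideal (MvPolynomial (Fin n) R) :=
  Ideal.span (Set.range fun j : Fin n => hh R n (lam j - (j : ℕ)) (fv n ((j : ℕ) + 1)))

lemma map_hh {A : Type*} [CommRing A] (f : MvPolynomial (Fin n) R →+* A) (m : ℕ)
    (S : Finset (Fin n)) : f (hh R n m S) = completeHomog S (f ∘ X) m :=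
  map_completeHomog f S X m

lemma partitionIdeal_le_ker_iff {A : Type*} [CommRing A] (f : MvPolynomial (Fin n) R →+* A) :
    partitionIdeal R lam ≤ RingHom.ker f ↔ SolvesUpTo lam (f ∘ X) n := by
  rw [partitionIdeal, Ideal.span_le, Set.range_subset_iff]
  simp [SolvesUpTo, RingHom.mem_ker, map_hh]

theorem stmt11_general [Nontrivial R] (hmono : Monotone lam)
    (hlam : ∀ j : Fin n, (j : ℕ) < lam j) (i : Fin n) (hind : ∀ j < i, (j : ℕ) + 2 ≤ lam j) :
    (Ideal.Quotient.mk (partitionIdeal R lam) (X i)) ^ lam i = 0 ∧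
      (Ideal.Quotient.mk (partitionIdeal R lam) (X i)) ^ (lam i - 1) ≠ 0 := by
  constructor
  · have generic : SolvesUpTo lam (Ideal.Quotient.mk (partitionIdeal R lam) ∘ X) n :=
      (partitionIdeal_le_ker_iff _).1 Ideal.mk_ker.ge
    exact ((generic.mono i.is_lt).pow_eq_zero_and_pow_pred_eq hmono (hlam i)).1
  · obtain ⟨A, _, _, x, hx, hpow⟩ := SolvesUpTo.exists_pow_pred_ne_zero R hmono hlam hind
    have hker : partitionIdeal R lam ≤ RingHom.ker (aeval x : MvPolynomial (Fin n) R →ₐ[R] A) := by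
      have haeval : aeval x ∘ (X : Fin n → MvPolynomial (Fin n) R) = x :=
        funext fun b => aeval_X x b
      exact (partitionIdeal_le_ker_iff (aeval x).toRingHom).2 (by simpa [haeval] using hx)
    intro h
    rw [← map_pow, Ideal.Quotient.eq_zero_iff_mem] at h
    exact hpow (by simpa using hker h)

end PartitionIdeal

/-- for an indecomposable partition `λ` (1-indexed: `λ_i ≥ i + 1` for all `i`;
0-indexed: `lam i ≥ i + 2`), the image of the variable `x_i` in `R^λ = ℤ[x]/I_λ` has
nilpotence order exactly `p = λ_i`: `x_i^p = 0` but `x_i^{p-1} ≠ 0`. -/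
theorem stmt11 (n : ℕ) (lam : Fin n → ℕ) (hmono : Monotone lam)
    (hind : ∀ j : Fin n, (j : ℕ) + 2 ≤ lam j) (i : Fin n)
    (I : Ideal (MvPolynomial (Fin n) ℤ))
    (hI : I = Ideal.span
      (Set.range fun j : Fin n => hh ℤ n (lam j - (j : ℕ)) (fv n ((j : ℕ) + 1)))) :
    (Ideal.Quotient.mk I (X i)) ^ (lam i) = 0 ∧
    (Ideal.Quotient.mk I (X i)) ^ (lam i - 1) ≠ 0 := by
  subst hI
  exact stmt11_general hmono (fun j => by have := hind j; lia) i (fun j _ => hind j)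
end

section
/- Let λ be an indecomposable partition with smallest part k = λ_1. Then no nonzero Z-linear form f = Σ a_i x_i in R^λ satisfies f^{k-1} = 0; consequently k is the minimal nilpotence order among nonzero degree-one elements of R^λ, and it is attained by x_1 (since x_1^k = h_k(x_1) ∈ I_λ). -/
open MvPolynomial Finset

/-!
Send the first `k - 1` variables to distinct `k`-th roots of unity and the others to `0`; one
coordinate may then be replaced by the remaining root of unity. Since every part of `λ` is at least
`k` and `λ` is indecomposable, the generators of `I_λ` of degree less than `k` vanish at each of
these points: on `r` distinct `k`-th roots of unity `h_m` is zero whenever `k - r < m < k`, by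
induction on `r` through `(x_a - x_b) h_m(S) = h_{m+1}(S - b) - h_{m+1}(S - a)`. As `I_λ` is
homogeneous, a linear form `f` with `f ^ (k - 1) ∈ I_λ` vanishes at all these points, and comparing
two of them that differ in one coordinate kills the corresponding coefficient.
-/

section CompleteHomogeneous

variable {R : Type*} [CommRing R] {n : ℕ}

lemma isHomogeneous_hh (m : ℕ) (S : Finset (Fin n)) : (hh R n m S).IsHomogeneous m := by
  refine IsHomogeneous.sum _ _ _ fun s _ => ?_
  have hprod : ∀ t : Multiset (Fin n),
      (t.map (X : Fin n → MvPolynomial (Fin n) R)).prod.IsHomogeneous (Multiset.card t) := by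
    intro t
    induction t using Multiset.induction_on with
    | empty => simpa using isHomogeneous_one (Fin n) R
    | cons a t ih =>
      rw [Multiset.map_cons, Multiset.prod_cons, Multiset.card_cons, add_comm]
      exact (isHomogeneous_X R a).mul ih
  simpa using hprod s

lemma hh_zero (S : Finset (Fin n)) : hh R n 0 S = 1 := by
  rw [hh, sym_zero, sum_singleton]
  rfl

lemma hh_singleton (m : ℕ) (a : Fin n) : hh R n m {a} = X a ^ m := by
  rw [hh, sym_singleton, sum_singleton, Sym.coe_replicate, Multiset.map_replicate,
    Multiset.prod_replicate]

lemma hh_succ_of_mem (m : ℕ) {S : Finset (Fin n)} {a : Fin n} (ha : a ∈ S) :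
    hh R n (m + 1) S = hh R n (m + 1) (S.erase a) + X a * hh R n m S := by
  have hnot : {s ∈ S.sym (m + 1) | a ∉ s} = (S.erase a).sym (m + 1) := by
    ext s
    simp only [mem_filter, mem_sym_iff, mem_erase]
    grind
  have hmem : {s ∈ S.sym (m + 1) | a ∈ s} = (S.sym m).image (Sym.cons a) := by
    ext s
    simp only [mem_filter, mem_sym_iff, mem_image]
    constructor
    · rintro ⟨hs, has⟩
      obtain ⟨t, rfl⟩ := Sym.exists_cons_of_mem has
      exact ⟨t, fun x hx => hs x (Sym.mem_cons_of_mem hx), rfl⟩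
    · rintro ⟨t, ht, rfl⟩
      refine ⟨fun x hx => ?_, Sym.mem_cons_self a t⟩
      rcases Sym.mem_cons.1 hx with rfl | hx
      exacts [ha, ht x hx]
  rw [hh, ← sum_filter_not_add_sum_filter _ (fun s => a ∈ s), hnot, hmem,
    sum_image fun s _ t _ h => (Sym.cons_inj_right a s t).1 h, hh, hh, mul_sum]
  simp only [Sym.coe_cons, Multiset.map_cons, Multiset.prod_cons]

lemma X_sub_X_mul_hh (m : ℕ) {S : Finset (Fin n)} {a b : Fin n} (ha : a ∈ S) (hb : b ∈ S) :
    (X a - X b) * hh R n m S = hh R n (m + 1) (S.erase b) - hh R n (m + 1) (S.erase a) := by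
  linear_combination hh_succ_of_mem (R := R) m hb - hh_succ_of_mem (R := R) m ha

variable {A : Type*} [CommRing A] [Algebra R A]

lemma aeval_hh_filter_ne_zero [DecidableEq A] (v : Fin n → A) (m : ℕ) (S : Finset (Fin n)) :
    aeval v (hh R n m {i ∈ S | v i ≠ 0}) = aeval v (hh R n m S) := by
  simp only [hh, map_sum, map_multiset_prod, Multiset.map_map, Function.comp_apply, aeval_X]
  refine sum_subset (sym_mono (filter_subset _ _) m) fun s hs hs' => ?_
  simp only [mem_sym_iff, mem_filter] at hs hs'
  push Not at hs'
  obtain ⟨i, his, hi⟩ := hs'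
  exact Multiset.prod_eq_zero (Multiset.mem_map.2 ⟨i, his, hi (hs i his)⟩)

-- The value at `m = k` does not depend on `S`; this starts the descent from `m + 1` to `m`.
lemma aeval_hh_of_pow_eq_one [IsDomain A] {k m : ℕ} {v : Fin n → A} {S : Finset (Fin n)}
    (hpow : ∀ i ∈ S, v i ^ k = 1) (hinj : Set.InjOn v S) (hmk : m ≤ k) (hkS : k < m + #S) :
    aeval v (hh R n m S) = if m = k then 1 else 0 := by
  induction hr : #S using Nat.strong_induction_on generalizing S m with
  | _ r ih =>
  have herase : ∀ a ∈ S, ∀ l ≤ k, k + 1 < l + #S →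
      aeval v (hh R n l (S.erase a)) = if l = k then 1 else 0 := by
    intro a ha l hl hlS
    have hcard := card_erase_add_one ha
    exact ih _ (by omega) (fun i hi => hpow i (mem_of_mem_erase hi))
      (hinj.mono (by simp)) hl (by omega) rfl
  have hlt : ∀ l < k, k < l + #S → aeval v (hh R n l S) = 0 := by
    intro l hl hlS
    obtain ⟨a, ha, b, hb, hab⟩ := one_lt_card.1 (by omega : 1 < #S)
    have hdiff := congrArg (aeval v) (X_sub_X_mul_hh (R := R) l ha hb)
    rw [map_mul, map_sub, map_sub, aeval_X, aeval_X, herase a ha _ hl (by omega),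
      herase b hb _ hl (by omega), sub_self] at hdiff
    exact (mul_eq_zero.1 hdiff).resolve_left (sub_ne_zero.2 fun h => hab (hinj ha hb h))
  obtain hm | rfl := hmk.lt_or_eq
  · rw [if_neg hm.ne, hlt m hm hkS]
  rw [if_pos rfl]
  obtain hS | hS := eq_or_ne #S 1
  · obtain ⟨a, rfl⟩ := card_eq_one.1 hS
    rw [hh_singleton, map_pow, aeval_X, hpow a (mem_singleton_self a)]
  · obtain ⟨a, ha⟩ : S.Nonempty := card_pos.1 (by omega)
    obtain _ | l := m
    · rw [hh_zero, map_one]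
    · rw [hh_succ_of_mem l ha, map_add, map_mul, herase a ha _ le_rfl (by omega),
        hlt l (by omega) (by omega), mul_zero, add_zero, if_pos rfl]

end CompleteHomogeneous

section HomogeneousIdeal

variable {σ R A : Type*} [CommRing R] [CommRing A] [Algebra R A]

lemma aeval_mul_const_of_isHomogeneous {p : MvPolynomial σ R} {m : ℕ} (hp : p.IsHomogeneous m)
    (v : σ → A) (t : A) : aeval (fun i => v i * t) p = aeval v p * t ^ m := by
  simp only [aeval_def, eval₂_eq, sum_mul]
  refine sum_congr rfl fun d hd => ?_
  have hdeg : ∑ i ∈ d.support, d i = m := (hp.degree_eq_sum_deg_support hd).symm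
  simp only [mul_pow, prod_mul_distrib, prod_pow_eq_pow_sum, hdeg, mul_assoc]

-- Substituting `v i * T` for `x_i` turns the degree of a homogeneous polynomial into a power of
-- `T`; generators of degree above `m` then cannot contribute to the coefficient of `T ^ m`.
lemma aeval_eq_zero_of_mem_span {ι : Type*} {g : ι → MvPolynomial σ R} {d : ι → ℕ}
    (hg : ∀ j, (g j).IsHomogeneous (d j)) {p : MvPolynomial σ R} {m : ℕ} (hp : p.IsHomogeneous m)
    (hmem : p ∈ Ideal.span (Set.range g)) {v : σ → A}
    (hv : ∀ j, d j ≤ m → aeval v (g j) = 0) : aeval v p = 0 := by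
  let Φ : MvPolynomial σ R →ₐ[R] Polynomial A :=
    aeval fun i => Polynomial.C (v i) * Polynomial.X
  have hΦ : ∀ {q : MvPolynomial σ R} {l : ℕ}, q.IsHomogeneous l →
      Φ q = Polynomial.C (aeval v q) * Polynomial.X ^ l := by
    intro q l hq
    rw [aeval_mul_const_of_isHomogeneous hq]
    congr 1
    exact (map_aeval v (Polynomial.C : A →+* _) q).symm
  have hle : Ideal.span (Set.range g) ≤
      (Ideal.span {(Polynomial.X : Polynomial A) ^ (m + 1)}).comap Φ := by
    rw [Ideal.span_le]
    rintro _ ⟨j, rfl⟩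
    rw [SetLike.mem_coe, Ideal.mem_comap, Ideal.mem_span_singleton, hΦ (hg j)]
    obtain hj | hj := le_or_gt (d j) m
    · simp [hv j hj]
    · exact (pow_dvd_pow _ hj).mul_left _
  have hdvd := hle hmem
  rw [Ideal.mem_comap, Ideal.mem_span_singleton, hΦ hp, Polynomial.X_pow_dvd_iff] at hdvd
  simpa only [Polynomial.coeff_C_mul_X_pow, if_true] using hdvd m m.lt_succ_self

end HomogeneousIdeal

/-- The ideal `I_λ` over a commutative ring `R`. The index `j` starts at `0`, so the generator
`h_{λ_i - i + 1}(x_1, ..., x_i)` with `i = j + 1` has degree `lam j - j`. -/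
noncomputable def lambdaIdeal (R : Type*) [CommRing R] {n : ℕ} (lam : Fin n → ℕ) :
    Ideal (MvPolynomial (Fin n) R) :=
  Ideal.span (Set.range fun j : Fin n => hh R n (lam j - (j : ℕ)) (fv n ((j : ℕ) + 1)))

/-- A point whose nonzero coordinates are pairwise distinct `k`-th roots of unity and include the
first `k - 1` coordinates. At such a point the generators of `I_λ` of degree less than `k` vanish
when every part of `λ` is at least `k`. -/
structure IsRootPoint {A : Type*} [CommRing A] {n : ℕ} (k : ℕ) (v : Fin n → A) : Prop where
  ne_zero : ∀ i : Fin n, (i : ℕ) + 1 < k → v i ≠ 0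
  pow_eq_one : ∀ i, v i ≠ 0 → v i ^ k = 1
  injOn : Set.InjOn v {i | v i ≠ 0}

namespace IsRootPoint

variable {A : Type*} [CommRing A] {n k : ℕ} {v : Fin n → A}

protected lemma update (hv : IsRootPoint k v) {c : A} (hc : c ≠ 0) (hck : c ^ k = 1)
    (hcv : ∀ i, v i ≠ c) (i : Fin n) : IsRootPoint k (Function.update v i c) where
  ne_zero j hj := by
    obtain rfl | hji := eq_or_ne j i
    · simpa using hc
    · simpa [hji] using hv.ne_zero j hj
  pow_eq_one j hj := by
    obtain rfl | hji := eq_or_ne j i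
    · simpa using hck
    · simp only [ne_eq, hji, not_false_eq_true, Function.update_of_ne] at hj ⊢
      exact hv.pow_eq_one j hj
  injOn := by
    intro p hp q hq hpq
    have hinj := @hv.injOn p
    grind [Function.update_apply]

lemma lt_add_card_filter_ne_zero [DecidableEq A] (hv : IsRootPoint k v) {j : Fin n} {l : ℕ}
    (hkl : k ≤ l) (hjl : (j : ℕ) + 2 ≤ l) :
    k < l - (j : ℕ) + #{i ∈ fv n ((j : ℕ) + 1) | v i ≠ 0} := by
  have hsub : fv n (min ((j : ℕ) + 1) (k - 1)) ⊆ {i ∈ fv n ((j : ℕ) + 1) | v i ≠ 0} := by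
    intro i hi
    simp only [fv, mem_filter, mem_univ, true_and, lt_min_iff] at hi ⊢
    exact ⟨hi.1, hv.ne_zero i (by omega)⟩
  have hcard : #(fv n (min ((j : ℕ) + 1) (k - 1))) = min ((j : ℕ) + 1) (k - 1) := by
    rw [fv, Fin.card_filter_val_lt]
    omega
  have := card_le_card hsub
  omega

variable [IsDomain A] {R : Type*} [CommRing R] [Algebra R A] {lam : Fin n → ℕ}

lemma aeval_eq_zero_of_mem_lambdaIdeal (hv : IsRootPoint k v) (hk : ∀ j, k ≤ lam j)
    (hind : ∀ j : Fin n, (j : ℕ) + 2 ≤ lam j) {p : MvPolynomial (Fin n) R} {m : ℕ}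
    (hp : p.IsHomogeneous m) (hmk : m < k) (hmem : p ∈ lambdaIdeal R lam) : aeval v p = 0 := by
  classical
  refine aeval_eq_zero_of_mem_span (fun j => isHomogeneous_hh _ _) hp hmem fun j hj => ?_
  rw [← aeval_hh_filter_ne_zero, aeval_hh_of_pow_eq_one (k := k), if_neg (by omega)]
  · exact fun i hi => hv.pow_eq_one i (mem_filter.1 hi).2
  · exact hv.injOn.mono fun i hi => (mem_filter.1 hi).2
  · omega
  · exact hv.lt_add_card_filter_ne_zero (hk j) (hind j)

lemma sum_algebraMap_mul_eq_zero (hv : IsRootPoint k v) (hk0 : k ≠ 0) (hk : ∀ j, k ≤ lam j)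
    (hind : ∀ j : Fin n, (j : ℕ) + 2 ≤ lam j) {a : Fin n → R}
    (ha : (∑ i, C (a i) * X i) ^ (k - 1) ∈ lambdaIdeal R lam) :
    ∑ i, algebraMap R A (a i) * v i = 0 := by
  have hlin : (∑ i, C (a i) * X i).IsHomogeneous 1 :=
    IsHomogeneous.sum _ _ _ fun i _ => isHomogeneous_C_mul_X (a i) i
  have hpow := hv.aeval_eq_zero_of_mem_lambdaIdeal hk hind (hlin.pow (k - 1)) (by omega) ha
  rw [map_pow] at hpow
  simpa using eq_zero_of_pow_eq_zero hpow

end IsRootPoint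

lemma exists_isRootPoint_forall_ne {A : Type*} [CommRing A] [IsDomain A] {k : ℕ} (hk : k ≠ 0)
    {ζ : A} (hζ : IsPrimitiveRoot ζ k) (n : ℕ) :
    ∃ v : Fin n → A, IsRootPoint k v ∧ ∀ i, v i ≠ ζ ^ (k - 1) := by
  let v : Fin n → A := fun i => if (i : ℕ) + 1 < k then ζ ^ (i : ℕ) else 0
  have hpos : ∀ i : Fin n, (i : ℕ) + 1 < k → v i = ζ ^ (i : ℕ) := fun i hi => if_pos hi
  have hneg : ∀ i : Fin n, ¬(i : ℕ) + 1 < k → v i = 0 := fun i hi => if_neg hi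
  have hlt : ∀ i, v i ≠ 0 → (i : ℕ) + 1 < k := fun i => not_imp_comm.1 (hneg i)
  have hζ0 : ∀ m, ζ ^ m ≠ 0 := fun m => pow_ne_zero m (hζ.ne_zero hk)
  refine ⟨v, ⟨fun i hi => hpos i hi ▸ hζ0 i, fun i hi => ?_, fun i hi j hj hij => ?_⟩,
    fun i h => ?_⟩
  · rw [hpos i (hlt i hi), pow_right_comm, hζ.pow_eq_one, one_pow]
  · have hik := hlt i hi
    have hjk := hlt j hj
    rw [hpos i hik, hpos j hjk] at hij
    exact Fin.ext (hζ.pow_inj (by omega) (by omega) hij)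
  · have hik := hlt i (h ▸ hζ0 _)
    rw [hpos i hik] at h
    have := hζ.pow_inj (by omega) (by omega) h
    omega

lemma eq_zero_of_linearForm_pow_mem_lambdaIdeal {R : Type*} [CommRing R] [IsDomain R] {n k : ℕ}
    (hkR : (k : R) ≠ 0) {lam : Fin n → ℕ} (hk : ∀ j, k ≤ lam j)
    (hind : ∀ j : Fin n, (j : ℕ) + 2 ≤ lam j) {a : Fin n → R}
    (ha : (∑ i, C (a i) * X i) ^ (k - 1) ∈ lambdaIdeal R lam) : a = 0 := by
  let F := FractionRing R
  let K := AlgebraicClosure F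
  have hF : Function.Injective (algebraMap R F) := IsFractionRing.injective R F
  have hK : Function.Injective (algebraMap R K) := by
    rw [IsScalarTower.algebraMap_eq R F K]
    exact (algebraMap F K).injective.comp hF
  have hk0 : k ≠ 0 := by rintro rfl; exact hkR Nat.cast_zero
  have : NeZero (k : F) := ⟨by simpa using hF.ne hkR⟩
  obtain ⟨ζ, hζ⟩ := HasEnoughRootsOfUnity.exists_primitiveRoot K k
  obtain ⟨v, hv, hvζ⟩ := exists_isRootPoint_forall_ne hk0 hζ n
  have hζk : (ζ ^ (k - 1)) ^ k = 1 := by rw [pow_right_comm, hζ.pow_eq_one, one_pow]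
  funext i
  have hw := hv.update (pow_ne_zero _ (hζ.ne_zero hk0)) hζk hvζ i
  have hdiff : algebraMap R K (a i) * (ζ ^ (k - 1) - v i) = 0 := calc
    _ = ∑ j, algebraMap R K (a j) * (Function.update v i (ζ ^ (k - 1)) j - v j) := by
      rw [sum_eq_single i (fun j _ hj => by simp [hj]) (by simp), Function.update_self]
    _ = 0 := by
      simp only [mul_sub, sum_sub_distrib, hw.sum_algebraMap_mul_eq_zero hk0 hk hind ha,
        hv.sum_algebraMap_mul_eq_zero hk0 hk hind ha, sub_self]
  have hai := (mul_eq_zero.1 hdiff).resolve_right (sub_ne_zero.2 (hvζ i).symm)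
  exact hK (hai.trans (map_zero _).symm)

lemma X_zero_pow_mem_lambdaIdeal (R : Type*) [CommRing R] {n : ℕ} (hn : 1 ≤ n) (lam : Fin n → ℕ) :
    (X ⟨0, hn⟩ : MvPolynomial (Fin n) R) ^ lam ⟨0, hn⟩ ∈ lambdaIdeal R lam := by
  have hfv : fv n 1 = {⟨0, hn⟩} := by
    ext i
    simp [fv, Fin.ext_iff]
  refine Ideal.subset_span ⟨⟨0, hn⟩, ?_⟩
  simp [hfv, hh_singleton]

theorem stmt15_general {R : Type*} [CommRing R] [IsDomain R] (n : ℕ) (hn : 1 ≤ n)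
    (lam : Fin n → ℕ) (hmin : ∀ j, lam ⟨0, hn⟩ ≤ lam j) (hR : (lam ⟨0, hn⟩ : R) ≠ 0)
    (hind : ∀ j : Fin n, (j : ℕ) + 2 ≤ lam j) :
    (∀ a : Fin n → R,
      (Ideal.Quotient.mk (lambdaIdeal R lam) (∑ i, C (a i) * X i)) ^ (lam ⟨0, hn⟩ - 1) = 0 →
      a = 0) ∧
    (Ideal.Quotient.mk (lambdaIdeal R lam) (X ⟨0, hn⟩)) ^ (lam ⟨0, hn⟩) = 0 := by
  simp only [← map_pow, Ideal.Quotient.eq_zero_iff_mem]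
  exact ⟨fun a ha => eq_zero_of_linearForm_pow_mem_lambdaIdeal hR hmin hind ha,
    X_zero_pow_mem_lambdaIdeal R hn lam⟩

/-- for an indecomposable partition `λ` (1-indexed `λ_i > i`, 0-indexed
`lam i ≥ i + 2`) with smallest part `k = λ_1`, no nonzero linear form `f = Σ aᵢ xᵢ` in
`R^λ` satisfies `f^{k-1} = 0`; and the minimal nilpotence order `k` is attained by `x_1`,
since `x_1^k = h_k(x_1) ∈ I_λ`. -/
theorem stmt15 (n : ℕ) (hn : 1 ≤ n) (lam : Fin n → ℕ) (hmono : Monotone lam)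
    (hind : ∀ j : Fin n, (j : ℕ) + 2 ≤ lam j)
    (I : Ideal (MvPolynomial (Fin n) ℤ))
    (hI : I = Ideal.span
      (Set.range fun j : Fin n => hh ℤ n (lam j - (j : ℕ)) (fv n ((j : ℕ) + 1)))) :
    (∀ a : Fin n → ℤ,
      (Ideal.Quotient.mk I (∑ i, C (a i) * X i)) ^ (lam ⟨0, hn⟩ - 1) = 0 →
      Ideal.Quotient.mk I (∑ i, C (a i) * X i) = 0) ∧
    (Ideal.Quotient.mk I (X ⟨0, hn⟩)) ^ (lam ⟨0, hn⟩) = 0 := by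
  subst hI
  have hk : (lam ⟨0, hn⟩ : ℤ) ≠ 0 := by have := hind ⟨0, hn⟩; omega
  exact (stmt15_general n hn lam (fun _ => hmono (Fin.mk_le_of_le_val (Nat.zero_le _))) hk
    hind).imp_left fun h a ha => by simp [h a ha]
end
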